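/- With p_k = ∫_0^{1/e} (c^{k-1} k^k / k!) e^{−T(c)+c} dc, we have p_k = (1+o(1)) · e^{−1+1/e} / (√(2π) · k^{3/2}) as k → ∞. -/

import Mathlib

open Real Filter

/-- The tree function `T(z) = Σ_{k≥1} k^{k-1} z^k / k!`. -/
noncomputable def treeFun (z : ℝ) : ℝ :=
  ∑' k : ℕ, ((k + 1 : ℕ) : ℝ) ^ k * z ^ (k + 1) / ((k + 1).factorial : ℝ)

/-- The limiting probability that the min mean-weight cycle in the directed complete
graph has length `k`. -/
noncomputable def pLen (k : ℕ) : ℝ :=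
  ∫ c in (0 : ℝ)..(1 / Real.exp 1),
    c ^ (k - 1) * (k : ℝ) ^ k / (k.factorial : ℝ) * Real.exp (-treeFun c + c)

/-- Terms of the tree series. -/
noncomputable def treeTerm (z : ℝ) (k : ℕ) : ℝ :=
  ((k + 1 : ℕ) : ℝ) ^ k * z ^ (k + 1) / ((k + 1).factorial : ℝ)

lemma treeFun_eq (z : ℝ) : treeFun z = ∑' k, treeTerm z k := rfl

lemma treeTerm_bound (k : ℕ) :
    treeTerm (1 / Real.exp 1) k ≤ 1 / ((k + 1 : ℕ) : ℝ) ^ (3 / 2 : ℝ) := by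
  have h := Stirling.le_factorial_stirling (k + 1)
  unfold treeTerm
  set n : ℝ := ((k + 1 : ℕ) : ℝ) with hn
  have hn0 : 0 < n := by rw [hn]; positivity
  have h32 : n ^ (3 / 2 : ℝ) = n * √n := by
    rw [show (3 / 2 : ℝ) = 1 + 1 / 2 by norm_num, rpow_add hn0, rpow_one, ← sqrt_eq_rpow]
  rw [h32, div_le_div_iff₀ (by positivity) (by positivity), one_mul]
  refine le_trans ?_ h
  have e1 : n ^ k * (1 / rexp 1) ^ (k + 1) * (n * √n) = √n * (n / rexp 1) ^ (k + 1) := by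
    rw [div_pow, div_pow, one_pow, pow_succ n k]; ring
  rw [e1]
  gcongr
  have := pi_gt_three
  nlinarith

lemma treeTerm_nonneg {z : ℝ} (hz : 0 ≤ z) (k : ℕ) : 0 ≤ treeTerm z k := by
  unfold treeTerm; positivity

lemma treeTerm_abs_le {z : ℝ} (hz : |z| ≤ 1 / Real.exp 1) (k : ℕ) :
    ‖treeTerm z k‖ ≤ treeTerm (1 / Real.exp 1) k := by
  unfold treeTerm
  rw [norm_div, norm_mul, norm_pow, norm_pow, Real.norm_natCast, Real.norm_natCast, Real.norm_eq_abs]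
  gcongr

lemma treeTerm_summable_crit : Summable (treeTerm (1 / Real.exp 1)) := by
  refine Summable.of_nonneg_of_le (fun k => treeTerm_nonneg (by positivity) k) treeTerm_bound ?_
  exact (summable_nat_add_iff 1 (f := fun n : ℕ => 1 / (n : ℝ) ^ (3 / 2 : ℝ))).2
    (Real.summable_one_div_nat_rpow.2 (by norm_num))

lemma treeTerm_summable {z : ℝ} (hz : |z| ≤ 1 / Real.exp 1) : Summable (treeTerm z) :=
  Summable.of_norm_bounded treeTerm_summable_crit (treeTerm_abs_le hz)

lemma treeFun_continuousOn : ContinuousOn treeFun (Set.Icc 0 (1 / Real.exp 1)) := by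
  refine continuousOn_tsum (u := treeTerm (1 / Real.exp 1)) (fun i => ?_) treeTerm_summable_crit
    (fun n x hx => treeTerm_abs_le (by rw [abs_of_nonneg hx.1]; exact hx.2) n)
  fun_prop

lemma treeFun_analyticAt {z : ℝ} (hz : |z| < 1 / Real.exp 1) : AnalyticAt ℝ treeFun z := by
  let c : ℕ → ℝ := fun k => ((k + 1 : ℕ) : ℝ) ^ k / ((k + 1).factorial : ℝ)
  let p := FormalMultilinearSeries.ofScalars ℝ c
  let r : NNReal := ⟨1 / Real.exp 1, by positivity⟩
  have hrv : (r : ℝ) = 1 / Real.exp 1 := rfl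
  have hr : (r : ENNReal) ≤ p.radius := by
    apply FormalMultilinearSeries.le_radius_of_summable
    have := treeTerm_summable_crit.mul_right (Real.exp 1)
    refine this.congr fun k => ?_
    simp only [p, FormalMultilinearSeries.ofScalars_norm]
    have hc : 0 ≤ c k := by simp only [c]; positivity
    rw [Real.norm_of_nonneg hc]
    simp only [c, treeTerm, hrv, pow_succ]
    field_simp
  have hpos : 0 < p.radius := lt_of_lt_of_le (by
    rw [ENNReal.coe_pos]
    exact (show (0 : ℝ) < 1 / Real.exp 1 by positivity)) hr
  have hA : AnalyticAt ℝ p.sum z := by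
    refine (p.hasFPowerSeriesOnBall hpos).analyticAt_of_mem ?_
    refine Metric.eball_subset_eball hr ?_
    rw [Metric.eball_coe]
    rw [Metric.mem_ball, dist_zero_right, hrv]
    exact hz
  have : treeFun = fun z => z * p.sum z := by
    ext z
    rw [treeFun_eq]
    simp only [FormalMultilinearSeries.sum, p, FormalMultilinearSeries.ofScalars_apply_eq]
    rw [← tsum_mul_left]
    refine tsum_congr fun k => ?_
    simp only [treeTerm, c, smul_eq_mul, pow_succ]; ring
  rw [this]
  exact analyticAt_id.mul hA

lemma alt_sum (n : ℕ) :
    ∑ p ∈ Finset.HasAntidiagonal.antidiagonal n, ((p.1 + 1 : ℕ) : ℝ) ^ p.1 / ((p.1 + 1).factorial : ℝ) *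
      ((-((p.1 + 1 : ℕ) : ℝ)) ^ p.2 / (p.2.factorial : ℝ)) = if n = 0 then 1 else 0 := by
  split_ifs with h
  · subst h; simp
  have h1 := fwdDiff_iter_eq_sum_shift (1 : ℝ) (fun r : ℝ => r ^ n) (n + 1) 0
  rw [fwdDiff_iter_pow_eq_zero_of_lt (Nat.lt_succ_self n)] at h1
  rw [Finset.sum_range_succ'] at h1
  simp only [Pi.zero_apply, zero_add, zero_smul, ne_eq, h, not_false_eq_true, zero_pow, smul_zero,
    add_zero] at h1
  rw [Finset.Nat.sum_antidiagonal_eq_sum_range_succ_mk]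
  have h2 := congrArg (fun t : ℝ => t / ((n + 1).factorial : ℝ)) h1
  simp only [zero_div, Finset.sum_div] at h2
  rw [h2]
  refine Finset.sum_congr rfl fun k hk => ?_
  have hk' : k ≤ n := Nat.lt_succ_iff.1 (Finset.mem_range.1 hk)
  have h3 : ((n + 1).choose (k + 1) : ℝ) =
      ((n + 1).factorial : ℝ) / (((k + 1).factorial : ℝ) * ((n - k).factorial : ℝ)) := by
    rw [Nat.cast_choose ℝ (Nat.succ_le_succ hk')]
    simp
  have h4 : ((k + 1 : ℕ) : ℝ) ^ n = ((k + 1 : ℕ) : ℝ) ^ k * ((k + 1 : ℕ) : ℝ) ^ (n - k) := by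
    rw [← pow_add]; congr 1; omega
  rw [zsmul_eq_mul, nsmul_eq_mul, mul_one]
  push_cast at h4 ⊢
  rw [h4, h3, neg_pow]
  field_simp

lemma mul_exp_neg_le {x : ℝ} : x * Real.exp (-x) ≤ 1 / Real.exp 1 := by
  have := Real.add_one_le_exp (x - 1)
  rw [le_div_iff₀ (by positivity), mul_assoc, ← Real.exp_add]
  have h2 : Real.exp (x - 1) * Real.exp (-x + 1) = 1 := by
    rw [← Real.exp_add]; simp
  calc x * rexp (-x + 1) ≤ rexp (x - 1) * rexp (-x + 1) := by gcongr; linarith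
    _ = 1 := h2

lemma treeFun_small {x : ℝ} (hx0 : 0 < x) (hx : x < 1 / 4) :
    treeFun (x * Real.exp (-x)) = x := by
  have hexp : x * Real.exp x ≤ 1 / Real.exp 1 := by
    rw [le_div_iff₀ (by positivity), mul_assoc, ← Real.exp_add]
    have h1 : Real.exp (x + 1) ≤ 4 := by
      have h2 : Real.exp (x + 1) ≤ Real.exp (5 / 4) := by gcongr; linarith
      have h3 : Real.exp (5 / 4) ^ 4 = Real.exp 1 ^ 5 := by
        rw [← Real.exp_nat_mul, ← Real.exp_nat_mul]; norm_num
      have h4 : Real.exp 1 ^ 5 ≤ 2.72 ^ 5 := by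
        gcongr; linarith [Real.exp_one_lt_d9]
      refine h2.trans ?_
      by_contra! h5
      have : (4 : ℝ) ^ 4 < Real.exp (5 / 4) ^ 4 := by gcongr
      rw [h3] at this
      norm_num at this h4
      linarith
    nlinarith
  let F : ℕ × ℕ → ℝ := fun p => ((p.1 + 1 : ℕ) : ℝ) ^ p.1 * x ^ (p.1 + 1) / ((p.1 + 1).factorial : ℝ) *
      ((-((p.1 + 1 : ℕ) : ℝ) * x) ^ p.2 / (p.2.factorial : ℝ))
  have hinner (y : ℝ) : HasSum (fun m : ℕ => y ^ m / (m.factorial : ℝ)) (Real.exp y) := by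
    rw [Real.exp_eq_exp_ℝ]; exact NormedSpace.expSeries_div_hasSum_exp y
  have hFn (p : ℕ × ℕ) : ‖F p‖ = treeTerm x p.1 *
      ((((p.1 + 1 : ℕ) : ℝ) * x) ^ p.2 / (p.2.factorial : ℝ)) := by
    simp only [F, treeTerm]
    rw [norm_mul, norm_div, norm_mul, norm_pow, norm_pow, norm_div, norm_pow, norm_mul, norm_neg,
      Real.norm_natCast, Real.norm_natCast, Real.norm_natCast, Real.norm_of_nonneg hx0.le]
  have hS : Summable F := by
    refine Summable.of_norm ?_
    rw [summable_prod_of_nonneg (fun p => norm_nonneg _)]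
    simp only [hFn]
    refine ⟨fun k => ((hinner _).mul_left _).summable, ?_⟩
    refine (treeTerm_summable (z := x * Real.exp x)
      (by rwa [abs_of_nonneg (by positivity)])).congr fun k => ?_
    rw [((hinner _).mul_left _).tsum_eq, Real.exp_nat_mul]
    simp only [treeTerm, mul_pow]; ring
  have e1 : ∑' p, F p = treeFun (x * Real.exp (-x)) := by
    rw [hS.tsum_prod, treeFun_eq]
    refine tsum_congr fun k => ?_
    simp only [F]
    rw [((hinner _).mul_left _).tsum_eq, neg_mul_comm, Real.exp_nat_mul]
    simp only [treeTerm, mul_pow]; ring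
  have e2 : ∑' p, F p = x := by
    rw [← (Finset.HasAntidiagonal.sigmaAntidiagonalEquivProd (A := ℕ)).tsum_eq F,
      Summable.tsum_sigma (f := fun c => F (Finset.HasAntidiagonal.sigmaAntidiagonalEquivProd c))
        ((Finset.HasAntidiagonal.sigmaAntidiagonalEquivProd (A := ℕ)).summable_iff.2 hS)]
    have : ∀ n : ℕ, ∑' c : Finset.HasAntidiagonal.antidiagonal n, F (Finset.HasAntidiagonal.sigmaAntidiagonalEquivProd ⟨n, c⟩)
        = if n = 0 then x else 0 := by
      intro n
      rw [tsum_fintype]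
      simp only [Finset.HasAntidiagonal.sigmaAntidiagonalEquivProd_apply]
      rw [Finset.sum_coe_sort (Finset.HasAntidiagonal.antidiagonal n) F]
      have h := congrArg (fun t => x ^ (n + 1) * t) (alt_sum n)
      simp only [Finset.mul_sum] at h
      have h' : ∑ p ∈ Finset.HasAntidiagonal.antidiagonal n, F p = x ^ (n + 1) * (if n = 0 then 1 else 0) := by
        rw [← h]
        refine Finset.sum_congr rfl fun p hp => ?_
        have hp' := Finset.HasAntidiagonal.mem_antidiagonal.1 hp
        rw [← hp']
        simp only [F, mul_pow]; ring
      rw [h']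
      split_ifs with h0
      · simp [h0]
      · simp
    simp only [this, tsum_ite_eq]
  rw [← e1, e2]

lemma treeFun_crit : treeFun (1 / Real.exp 1) = 1 := by
  have hlt : ∀ x ∈ Set.Ioo (0 : ℝ) 1, |x * Real.exp (-x)| < 1 / Real.exp 1 := by
    intro x hx
    have hx0 := hx.1
    rw [abs_of_pos (by positivity)]
    have := Real.add_one_lt_exp (x := x - 1) (by linarith [hx.2])
    rw [lt_div_iff₀ (by positivity), mul_assoc, ← Real.exp_add]
    have h2 : Real.exp (x - 1) * Real.exp (-x + 1) = 1 := by
      rw [← Real.exp_add]; simp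
    calc x * rexp (-x + 1) < rexp (x - 1) * rexp (-x + 1) := by gcongr; linarith
      _ = 1 := h2
  have hEq : Set.EqOn (fun x => treeFun (x * Real.exp (-x))) (fun x => x) (Set.Ioo (0 : ℝ) 1) := by
    refine AnalyticOnNhd.eqOn_of_preconnected_of_eventuallyEq (𝕜 := ℝ) ?_ ?_ isPreconnected_Ioo
      (z₀ := 1 / 8) (by norm_num) ?_
    · intro x hx
      exact AnalyticAt.fun_comp (treeFun_analyticAt (hlt x hx)) (by fun_prop)
    · intro x _
      exact analyticAt_id
    · filter_upwards [Ioo_mem_nhds (show (0 : ℝ) < 1 / 8 by norm_num)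
        (show (1 / 8 : ℝ) < 1 / 4 by norm_num)] with x hx
      exact treeFun_small hx.1 hx.2
  have hcont : ContinuousOn (fun x => treeFun (x * Real.exp (-x))) (Set.Icc (0 : ℝ) 1) := by
    refine treeFun_continuousOn.comp (by fun_prop) fun x hx => ⟨?_, mul_exp_neg_le⟩
    have := hx.1
    positivity
  have h1 : Set.EqOn (fun x => treeFun (x * Real.exp (-x))) (fun x => x) (Set.Icc (0 : ℝ) 1) := by
    refine hEq.of_subset_closure hcont continuousOn_id Set.Ioo_subset_Icc_self ?_
    rw [closure_Ioo (by norm_num)]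
  have := h1 (show (1 : ℝ) ∈ Set.Icc (0 : ℝ) 1 by simp)
  simpa [Real.exp_neg] using this

/-- `p_k = (1+o(1)) · e^{−1+1/e} / (√(2π) k^{3/2})` as `k → ∞`. -/
theorem pLen_asymp :
    Tendsto (fun k : ℕ =>
        pLen k / (Real.exp (-1 + 1 / Real.exp 1) / (Real.sqrt (2 * π) * (k : ℝ) ^ (3 / 2 : ℝ))))
      atTop (nhds 1) := by
  have hE : (0 : ℝ) < 1 / Real.exp 1 := by positivity
  let g : ℝ → ℝ := fun c => Real.exp (-treeFun c + c)
  have hg : ContinuousOn g (Set.Icc 0 (1 / Real.exp 1)) :=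
    (treeFun_continuousOn.neg.add continuousOn_id).rexp
  have hpk := tendsto_setIntegral_pow_smul_of_unique_maximum_of_isCompact_of_continuousOn
    (μ := MeasureTheory.volume) (c := fun x : ℝ => x) (x₀ := 1 / Real.exp 1) (g := g)
    (isCompact_Icc (a := (0 : ℝ)) (b := 1 / Real.exp 1)) continuousOn_id
    (fun y hy hne => lt_of_le_of_ne hy.2 hne) (fun x hx => hx.1) hE
    (by rw [interior_Icc, closure_Ioo hE.ne]; exact ⟨hE.le, le_rfl⟩) hg
  have hgv : g (1 / Real.exp 1) = Real.exp (-1 + 1 / Real.exp 1) := by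
    simp only [g]; rw [treeFun_crit]
  rw [hgv] at hpk
  have hst := (Asymptotics.isEquivalent_iff_tendsto_one (by
    filter_upwards [eventually_gt_atTop 0] with n hn
    have : (0 : ℝ) < n := by exact_mod_cast hn
    positivity)).1 Stirling.factorial_isEquivalent_stirling
  have hst' := (tendsto_add_atTop_iff_nat 1).2 hst
  rw [← tendsto_add_atTop_iff_nat 1]
  have hfin := (hpk.div_const (Real.exp (-1 + 1 / Real.exp 1))).div hst' one_ne_zero
  rw [div_self (Real.exp_pos _).ne', div_one] at hfin
  refine hfin.congr fun n => ?_
  simp only [Pi.div_apply, smul_eq_mul]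
  have hI : pLen (n + 1) = ((n + 1 : ℕ) : ℝ) ^ (n + 1) / ((n + 1).factorial : ℝ) *
      ∫ x in Set.Icc 0 (1 / Real.exp 1), x ^ n * g x := by
    unfold pLen
    rw [intervalIntegral.integral_of_le hE.le, ← MeasureTheory.integral_Icc_eq_integral_Ioc,
      ← MeasureTheory.integral_const_mul]
    congr 1
    ext c
    simp only [g, Nat.add_sub_cancel]; ring
  have hJ : ∫ x in Set.Icc 0 (1 / Real.exp 1), x ^ n =
      (1 / Real.exp 1) ^ (n + 1) / ((n + 1 : ℕ) : ℝ) := by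
    rw [MeasureTheory.integral_Icc_eq_integral_Ioc, ← intervalIntegral.integral_of_le hE.le,
      integral_pow]
    simp
  rw [hI, hJ]
  set I := ∫ x in Set.Icc 0 (1 / Real.exp 1), x ^ n * g x
  set N : ℝ := ((n + 1 : ℕ) : ℝ) with hN
  have hN0 : 0 < N := by rw [hN]; positivity
  have h32 : N ^ (3 / 2 : ℝ) = N * √N := by
    rw [show (3 / 2 : ℝ) = 1 + 1 / 2 by norm_num, rpow_add hN0, rpow_one, ← sqrt_eq_rpow]
  have hs : √(2 * N * π) = √(2 * π) * √N := by
    rw [← Real.sqrt_mul (by positivity)]; congr 1; ring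
  rw [h32, hs, div_pow, div_pow, one_pow]
  have : 0 < √(2 * π) := by positivity
  have : 0 < √N := by positivity
  field_simp
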